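/- For every integer k ≥ 3, the series Σ_{n ≥ 3, n ≠ k} (1/|n − k|) · Σ_{j ≥ 3, j ≠ n} 1/( (log j)² · |n − j| ) diverges to +∞. -/

import Mathlib

theorem aux_pow_log_upper (m : ℕ) : Real.log ((2:ℝ)^m + 1) ≤ (m + 1) * Real.log 2 := by
  have h : (2:ℝ)^m + 1 ≤ 2^(m+1) := by
    have : (1:ℝ) ≤ 2^m := one_le_pow₀ (by norm_num)
    rw [pow_succ]; linarith
  have := Real.log_le_log (by positivity) h
  rw [Real.log_pow] at this
  exact_mod_cast this

theorem aux_pow_log_lower (m : ℕ) : m * Real.log 2 ≤ Real.log ((2:ℝ)^m + 1) := by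
  rw [← Real.log_pow]
  exact Real.log_le_log (by positivity) (by linarith)

theorem aux_not_summable : ¬ Summable (fun n : ℕ => 1 / ((n:ℝ) * Real.log (n + 1))) := by
  rw [← summable_condensed_iff_of_nonneg]
  · intro h
    have h2 : Summable (fun m : ℕ => 1 / ((m:ℝ) + 1)) := by
      have h3 := h.mul_left (Real.log 2)
      refine Summable.of_nonneg_of_le (fun m => by positivity) (fun m => ?_) h3
      have hl := aux_pow_log_upper m
      have hp : 0 < Real.log ((2:ℝ)^m + 1) := Real.log_pos (by have : (0:ℝ) < 2^m := by positivity
                                                               linarith)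
      push_cast
      have e : Real.log 2 * (2 ^ m * (1 / (2 ^ m * Real.log ((2:ℝ) ^ m + 1)))) = Real.log 2 / Real.log ((2:ℝ)^m+1) := by
        field_simp
      rw [e, div_le_div_iff₀ (by positivity) hp]
      linarith
    have h4 := (summable_nat_add_iff (f := fun n : ℕ => 1 / (n:ℝ)) 1).1 (by simpa using h2)
    exact Real.not_summable_one_div_natCast h4
  · intro n
    have : 0 ≤ Real.log ((n:ℝ) + 1) := Real.log_nonneg (by have : (0:ℝ) ≤ n := by positivity
                                                           linarith)
    positivity
  · intro m n hm hmn
    have hm' : (0:ℝ) < m := by exact_mod_cast hm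
    have hmn' : (m:ℝ) ≤ n := by exact_mod_cast hmn
    have hp : 0 < Real.log ((m:ℝ) + 1) := Real.log_pos (by linarith)
    have := Real.log_le_log (by linarith : (0:ℝ) < m + 1) (by linarith : (m:ℝ) + 1 ≤ n + 1)
    gcongr

theorem aux_summable : Summable (fun n : ℕ => 1 / ((n:ℝ) * Real.log (n + 1) ^ 2)) := by
  rw [← summable_condensed_iff_of_nonneg]
  · have h2 : Summable (fun m : ℕ => 1 / ((m:ℝ)) ^ 2) :=
      Real.summable_one_div_nat_pow.2 (by norm_num)
    refine Summable.of_norm_bounded_eventually_nat (h2.mul_left (1 / Real.log 2 ^ 2)) ?_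
    filter_upwards [Filter.eventually_ge_atTop 1] with m hm
    have hm' : (0:ℝ) < m := by exact_mod_cast hm
    have hl := aux_pow_log_lower m
    have h0 : 0 < Real.log 2 := Real.log_pos (by norm_num)
    have hp : 0 < Real.log ((2:ℝ)^m + 1) := lt_of_lt_of_le (by positivity) hl
    push_cast
    have e : (2 ^ m * (1 / (2 ^ m * Real.log ((2:ℝ) ^ m + 1) ^ 2))) = 1 / Real.log ((2:ℝ)^m+1) ^ 2 := by
      field_simp
    rw [e, Real.norm_of_nonneg (by positivity), one_div_mul_one_div, ← mul_pow, mul_comm (Real.log 2)]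
    gcongr
  · intro n
    positivity
  · intro m n hm hmn
    have hm' : (0:ℝ) < m := by exact_mod_cast hm
    have hmn' : (m:ℝ) ≤ n := by exact_mod_cast hmn
    have hp : 0 < Real.log ((m:ℝ) + 1) := Real.log_pos (by linarith)
    have := Real.log_le_log (by linarith : (0:ℝ) < m + 1) (by linarith : (m:ℝ) + 1 ≤ n + 1)
    gcongr

theorem aux_log_succ (x : ℝ) (hx : 2 ≤ x) : Real.log (x + 1) ≤ 2 * Real.log x := by
  have h : x + 1 ≤ x ^ 2 := by nlinarith
  have := Real.log_le_log (by linarith) h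
  rw [Real.log_pow] at this
  exact_mod_cast this

theorem aux_inner_summable (n : ℕ) : Summable (fun j : ℕ => (if 3 ≤ j ∧ j ≠ n then
            1 / (Real.log j ^ 2 * |(n : ℝ) - (j : ℝ)|) else 0)) := by
  refine Summable.of_norm_bounded_eventually_nat (aux_summable.mul_left 8) ?_
  filter_upwards [Filter.eventually_ge_atTop (2 * n + 3)] with j hj
  have hj' : (2 * n + 3 : ℝ) ≤ j := by exact_mod_cast hj
  have hn : (0:ℝ) ≤ n := by positivity
  rw [if_pos (by omega), abs_of_neg (by linarith), Real.norm_of_nonneg (by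
    have : 0 ≤ -((n:ℝ) - j) := by linarith
    positivity)]
  have h1 := aux_log_succ j (by linarith)
  have h2 : 0 < Real.log j := Real.log_pos (by linarith)
  have h3 : 0 < Real.log ((j:ℝ) + 1) := Real.log_pos (by linarith)
  have h4 : Real.log ((j:ℝ) + 1) ^ 2 ≤ 4 * Real.log j ^ 2 := by nlinarith
  have h5 : 0 < -((n:ℝ) - j) := by linarith
  have h6 : (j:ℝ) ≤ 2 * (-((n:ℝ) - j)) := by linarith
  have h7 := mul_le_mul h6 h4 (by positivity) (by positivity)
  rw [mul_one_div, div_le_div_iff₀ (by positivity) (mul_pos (by linarith) (by positivity))]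
  linarith

theorem aux_harm (n : ℕ) (hn : 4 ≤ n) :
    Real.log n / 2 ≤ ∑ j ∈ Finset.Ico 3 n, 1 / ((n:ℝ) - j) := by
  obtain ⟨m, rfl⟩ := Nat.exists_eq_add_of_le hn
  have h1 := log_add_one_le_harmonic (m + 1)
  have e : ∑ j ∈ Finset.Ico 3 (4 + m), 1 / (((4 + m : ℕ):ℝ) - j) = (harmonic (m+1) : ℝ) := by
    rw [Finset.sum_Ico_eq_sum_range, harmonic, ← Finset.sum_range_reflect]
    push_cast
    rw [show 4 + m - 3 = m + 1 by omega]
    refine Finset.sum_congr rfl fun i hi => ?_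
    have hi' : i ≤ m := by simpa [Nat.lt_succ_iff] using hi
    rw [one_div, show m + 1 - 1 - i = m - i by omega, Nat.cast_sub hi']
    congr 1
    ring
  rw [e]
  refine le_trans ?_ h1
  have h2 : ((4 + m : ℕ) : ℝ) ≤ (((m + 1 : ℕ) : ℝ) + 1) ^ 2 := by
    push_cast; nlinarith [(Nat.cast_nonneg m : (0:ℝ) ≤ m)]
  have := Real.log_le_log (by positivity) h2
  rw [Real.log_pow] at this
  push_cast at this ⊢
  linarith

theorem aux_inner_lower (n : ℕ) (hn : 4 ≤ n) : 1 / (2 * Real.log n) ≤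
    ∑' j : ℕ, (if 3 ≤ j ∧ j ≠ n then
            1 / (Real.log j ^ 2 * |(n : ℝ) - (j : ℝ)|) else 0) := by
  refine le_trans ?_ ((aux_inner_summable n).sum_le_tsum (Finset.Ico 3 n) (fun j _ => by
    split_ifs <;> positivity))
  have hn' : (4:ℝ) ≤ n := by exact_mod_cast hn
  have hL : 0 < Real.log n := Real.log_pos (by linarith)
  have h : 1 / (2 * Real.log n) ≤ (1 / Real.log n ^ 2) * ∑ j ∈ Finset.Ico 3 n, 1 / ((n:ℝ) - j) := by
    refine le_trans (le_of_eq ?_) (mul_le_mul_of_nonneg_left (aux_harm n hn) (by positivity))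
    field_simp
  refine h.trans ?_
  rw [Finset.mul_sum]
  refine Finset.sum_le_sum fun j hj => ?_
  rw [Finset.mem_Ico] at hj
  have hj1 : (3:ℝ) ≤ j := by exact_mod_cast hj.1
  have hj2 : (j:ℝ) < n := by exact_mod_cast hj.2
  have hl : 0 < Real.log j := Real.log_pos (by linarith)
  have hle : Real.log j ≤ Real.log n := Real.log_le_log (by linarith) hj2.le
  have hs : 0 < (n:ℝ) - j := by linarith
  rw [if_pos (by omega), abs_of_pos hs, one_div_mul_one_div]
  gcongr

theorem statement15 (k : ℕ) (hk : 3 ≤ k) :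
    (∑' n : ℕ, if 3 ≤ n ∧ n ≠ k then
        ENNReal.ofReal ((1 / |(n : ℝ) - (k : ℝ)|) *
          ∑' j : ℕ, (if 3 ≤ j ∧ j ≠ n then
            1 / (Real.log j ^ 2 * |(n : ℝ) - (j : ℝ)|) else 0))
      else 0) = ⊤ := by
  by_contra hne
  have hs := (ENNReal.summable_toReal hne).mul_left 2
  refine aux_not_summable (Summable.of_norm_bounded_eventually_nat hs ?_)
  filter_upwards [Filter.eventually_ge_atTop (k + 1)] with n hn
  have hkn : (k:ℝ) + 1 ≤ n := by exact_mod_cast hn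
  have hk' : (3:ℝ) ≤ k := by exact_mod_cast hk
  have hlow := aux_inner_lower n (by omega)
  have hL : 0 < Real.log n := Real.log_pos (by linarith)
  have hle : Real.log n ≤ Real.log ((n:ℝ) + 1) := Real.log_le_log (by linarith) (by linarith)
  have hd : 0 < (n:ℝ) - k := by linarith
  have hn0 : (0:ℝ) < n := by linarith
  have hL1 : 0 < Real.log ((n:ℝ) + 1) := by linarith
  rw [if_pos (by omega), ENNReal.toReal_ofReal (mul_nonneg (by positivity)
    (le_trans (by positivity) hlow)), abs_of_pos hd, Real.norm_of_nonneg (by positivity)]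
  calc 1 / ((n:ℝ) * Real.log (n + 1)) ≤ 1 / (((n:ℝ) - k) * Real.log n) := by
        gcongr
        linarith
    _ = 2 * (1 / ((n:ℝ) - k) * (1 / (2 * Real.log n))) := by field_simp
    _ ≤ _ := by gcongr
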